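/- arXiv:2205.14273 — 5 statements merged into one kernel-verified Lean document; each statement's English description precedes it below -/
import Mathlib

section
/- Let ι and κ be finite types (the fine and coarse grid points), k a natural number, part : ι → Fin k and partc : κ → Fin k assignments of points to parts, B a set of fine boundary points in ι, and Bc a set of coarse boundary points in κ. Let U be a real ι×ι matrix and P a real ι×κ matrix such that: (i) U i j = 0 whenever part i = part j (no unstructured connections within a part); (ii) U i j = 0 whenever i ∉ B or j ∉ B (unstructured connections only between boundary points); (iii) P i c = 0 whenever part i ≠ partc c (interpolation acts only within a part); (iv) for every i ∈ B and every c with P i c ≠ 0, one has c ∈ Bc (fine boundary points interpolate only from coarse boundary points). Then the coarse unstructured operator Uc = Pᵀ * U * P satisfies: Uc c d = 0 whenever partc c = partc d, and Uc c d = 0 whenever c ∉ Bc or d ∉ Bc. That is, the graph of Uc contains no connections within a part and only connections between coarse boundary points of different parts. -/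
open Matrix

/-!
An entry `(Pᵀ * U * P) c d` is the sum of the products `P i c * U i j * P j d`, so if it is nonzero
there is a path `c — i — j — d` through nonzero entries of `P`, `U` and `P`. Interpolation preserves
parts and links fine boundary points only to coarse boundary points, so the properties of the
edge `i — j` in the graph of `U` carry over to the pair `c`, `d`.
-/

theorem ssamg_coarse_unstructured_support
    {ι κ : Type*} [Fintype ι] [Fintype κ] [DecidableEq ι] [DecidableEq κ]
    {k : ℕ} (part : ι → Fin k) (partc : κ → Fin k)
    (B : Set ι) (Bc : Set κ)
    (U : Matrix ι ι ℝ) (P : Matrix ι κ ℝ)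
    (hU_part : ∀ i j, part i = part j → U i j = 0)
    (hU_bdry : ∀ i j, i ∉ B ∨ j ∉ B → U i j = 0)
    (hP_part : ∀ i c, part i ≠ partc c → P i c = 0)
    (hP_bdry : ∀ i c, i ∈ B → P i c ≠ 0 → c ∈ Bc) :
    (∀ c d, partc c = partc d → (Pᵀ * U * P) c d = 0) ∧
    (∀ c d, c ∉ Bc ∨ d ∉ Bc → (Pᵀ * U * P) c d = 0) := by
  -- A nonzero entry of the triple product forces a nonzero term `P i c * U i j * P j d`.
  have path : ∀ c d, (Pᵀ * U * P) c d ≠ 0 → ∃ i j, P i c ≠ 0 ∧ U i j ≠ 0 ∧ P j d ≠ 0 := by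
    intro c d h
    rw [Matrix.mul_apply] at h
    obtain ⟨j, -, hj⟩ := Finset.exists_ne_zero_of_sum_ne_zero h
    have hj' := left_ne_zero_of_mul hj
    rw [Matrix.mul_apply] at hj'
    obtain ⟨i, -, hi⟩ := Finset.exists_ne_zero_of_sum_ne_zero hj'
    exact ⟨i, j, left_ne_zero_of_mul hi, right_ne_zero_of_mul hi, right_ne_zero_of_mul hj⟩
  constructor
  · intro c d hcd
    by_contra h
    obtain ⟨i, j, hi, hij, hj⟩ := path c d h
    have hic : part i = partc c := not_imp_comm.mp (hP_part i c) hi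
    have hjd : part j = partc d := not_imp_comm.mp (hP_part j d) hj
    exact hij (hU_part i j (by rw [hic, hjd, hcd]))
  · intro c d hcd
    by_contra h
    obtain ⟨i, j, hi, hij, hj⟩ := path c d h
    have hB : ¬(i ∉ B ∨ j ∉ B) := fun hB => hij (hU_bdry i j hB)
    rw [not_or, not_not, not_not] at hB
    exact hcd.elim (fun hc => hc (hP_bdry i c hB.1 hi)) (fun hd => hd (hP_bdry j d hB.2 hj))
end

section
/- Let ι and κ be finite types (the fine and coarse grid points), k a natural number, and part : ι → Fin k and partc : κ → Fin k assignments of points to parts. Let U be a real ι×ι matrix with U i j = 0 whenever part i = part j, and let P be a real ι×κ matrix with P i c = 0 whenever part i ≠ partc c. Then for all coarse points c, d with partc c = partc d, the triple product satisfies (Pᵀ * U * P) c d = 0; i.e., the coarse operator Pᵀ U P has no connections within any part. -/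
open Matrix

theorem ssamg_coarse_no_intra_part_connections
    {ι κ : Type*} [Fintype ι] [Fintype κ]
    {k : ℕ} (part : ι → Fin k) (partc : κ → Fin k)
    (U : Matrix ι ι ℝ) (P : Matrix ι κ ℝ)
    (hU : ∀ i j, part i = part j → U i j = 0)
    (hP : ∀ i c, part i ≠ partc c → P i c = 0) :
    ∀ c d, partc c = partc d → (Pᵀ * U * P) c d = 0 := by
  intro c d hcd
  simp only [Matrix.mul_apply, Matrix.transpose_apply, Finset.sum_mul]
  refine Finset.sum_eq_zero fun j _ => Finset.sum_eq_zero fun i _ => ?_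
  -- A term `P i c * U i j * P j d` survives only if `i` and `j` both lie in the common part
  -- of `c` and `d`, and there `U i j` vanishes.
  by_cases hi : part i = partc c
  · by_cases hj : part j = partc d
    · simp [hU i j (hi.trans (hcd.trans hj.symm))]
    · simp [hP j d hj]
  · simp [hP i c hi]
end

section
/- Let ι and κ be finite types, f : ι → ℤ and g : κ → ℤ coordinate maps of fine and coarse grid points (a coarse point c sitting at fine coordinate 2·g c). Let A be a real ι×ι matrix with A i j = 0 whenever |f i − f j| > 1 (a three-point stencil), and let P be a real ι×κ matrix with P i c = 0 whenever |f i − 2·g c| > 1 (two-point interpolation from the two adjacent coarse points). Then the Galerkin coarse operator satisfies (Pᵀ * A * P) c d = 0 whenever |g c − g d| > 1; i.e., the coarse operator is again a three-point stencil. -/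
open Matrix

theorem ssamg_coarse_three_point_stencil
    {ι κ : Type*} [Fintype ι] [Fintype κ]
    (f : ι → ℤ) (g : κ → ℤ)
    (A : Matrix ι ι ℝ) (P : Matrix ι κ ℝ)
    (hA : ∀ i j, 1 < |f i - f j| → A i j = 0)
    (hP : ∀ i c, 1 < |f i - 2 * g c| → P i c = 0) :
    ∀ c d, 1 < |g c - g d| → (Pᵀ * A * P) c d = 0 := by
  intro c d hcd
  simp only [Matrix.mul_apply, Matrix.transpose_apply, Finset.sum_mul]
  refine Finset.sum_eq_zero fun j _ => Finset.sum_eq_zero fun i _ => ?_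
  -- A nonzero term `P i c * A i j * P j d` would give a path `2 * g c, f i, f j, 2 * g d` with
  -- three steps of length at most 1, whereas `|2 * g c - 2 * g d| ≥ 4`.
  by_cases h1 : 1 < |f i - 2 * g c|
  · simp [hP i c h1]
  by_cases h2 : 1 < |f i - f j|
  · simp [hA i j h2]
  by_cases h3 : 1 < |f j - 2 * g d|
  · simp [hP j d h3]
  rw [not_lt, abs_le] at h1 h2 h3
  rw [lt_abs] at hcd
  omega
end

section
/- Let ι and κ be finite types, f : ι → ℤ × ℤ and g : κ → ℤ × ℤ coordinate maps of fine and coarse grid points, with semi-coarsening by a factor of two in the first direction (a coarse point c sits at fine coordinate (2·(g c).1, (g c).2)). Let A be a real ι×ι matrix with A i j = 0 unless |(f i).1 − (f j).1| ≤ 1 and |(f i).2 − (f j).2| ≤ 1 (a stencil contained in the nine-point stencil), and let P be a real ι×κ matrix with P i c = 0 unless (f i).2 = (g c).2 and |(f i).1 − 2·(g c).1| ≤ 1 (two-point interpolation aligned with the coarsening direction). Then the Galerkin coarse operator satisfies (Pᵀ * A * P) c d = 0 unless |(g c).1 − (g d).1| ≤ 1 and |(g c).2 − (g d).2| ≤ 1;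 i.e., the coarse stencil is again contained in the nine-point stencil, so stencil size never grows beyond nine in 2D. -/
open Matrix

theorem ssamg_coarse_nine_point_stencil
    {ι κ : Type*} [Fintype ι] [Fintype κ]
    (f : ι → ℤ × ℤ) (g : κ → ℤ × ℤ)
    (A : Matrix ι ι ℝ) (P : Matrix ι κ ℝ)
    (hA : ∀ i j, ¬(|(f i).1 - (f j).1| ≤ 1 ∧ |(f i).2 - (f j).2| ≤ 1) → A i j = 0)
    (hP : ∀ i c, ¬((f i).2 = (g c).2 ∧ |(f i).1 - 2 * (g c).1| ≤ 1) → P i c = 0) :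
    ∀ c d, ¬(|(g c).1 - (g d).1| ≤ 1 ∧ |(g c).2 - (g d).2| ≤ 1) →
      (Pᵀ * A * P) c d = 0 := by
  intro c d hcd
  simp only [Matrix.mul_apply, Matrix.transpose_apply]
  refine Finset.sum_eq_zero fun j _ => ?_
  by_cases hjd : (f j).2 = (g d).2 ∧ |(f j).1 - 2 * (g d).1| ≤ 1
  swap
  · rw [hP j d hjd, mul_zero]
  refine mul_eq_zero_of_left (Finset.sum_eq_zero fun i _ => ?_) _
  by_cases hic : (f i).2 = (g c).2 ∧ |(f i).1 - 2 * (g c).1| ≤ 1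
  swap
  · rw [hP i c hic, zero_mul]
  -- A nonzero term `P i c * A i j * P j d` would give `2 * |(g c).1 - (g d).1| ≤ 1 + 1 + 1`,
  -- hence `|(g c).1 - (g d).1| ≤ 1` by integrality; second coordinates are preserved by `P`.
  rw [hA i j fun hij => hcd ?_, mul_zero]
  simp only [abs_le] at *
  omega
end

section
/- Let ι and κ be finite types, f : ι → ℤ × ℤ × ℤ and g : κ → ℤ × ℤ × ℤ coordinate maps of fine and coarse grid points, with semi-coarsening by a factor of two in the first direction (a coarse point c sits at fine coordinate (2·(g c).1, (g c).2.1, (g c).2.2)). Let A be a real ι×ι matrix with A i j = 0 unless each of the three coordinate differences of f i and f j has absolute value at most 1 (a stencil contained in the 27-point stencil), and let P be a real ι×κ matrix with P i c = 0 unless (f i).2.1 = (g c).2.1, (f i).2.2 = (g c).2.2, and |(f i).1 − 2·(g c).1| ≤ 1 (two-point interpolation aligned with the coarsening direction). Then the Galerkin coarse operator satisfies (Pᵀ * A * P) c d = 0 unless each of the three coordinate differences of g c and g d has absolute value at most 1; i.e., the coarse stencil is again contained in the 27-point stencil, so stencil size never grows beyond 27 in 3D. -/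
open Matrix

theorem ssamg_coarse_27_point_stencil
    {ι κ : Type*} [Fintype ι] [Fintype κ]
    (f : ι → ℤ × ℤ × ℤ) (g : κ → ℤ × ℤ × ℤ)
    (A : Matrix ι ι ℝ) (P : Matrix ι κ ℝ)
    (hA : ∀ i j, ¬(|(f i).1 - (f j).1| ≤ 1 ∧ |(f i).2.1 - (f j).2.1| ≤ 1 ∧
        |(f i).2.2 - (f j).2.2| ≤ 1) → A i j = 0)
    (hP : ∀ i c, ¬((f i).2.1 = (g c).2.1 ∧ (f i).2.2 = (g c).2.2 ∧
        |(f i).1 - 2 * (g c).1| ≤ 1) → P i c = 0) :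
    ∀ c d, ¬(|(g c).1 - (g d).1| ≤ 1 ∧ |(g c).2.1 - (g d).2.1| ≤ 1 ∧
        |(g c).2.2 - (g d).2.2| ≤ 1) →
      (Pᵀ * A * P) c d = 0 := by
  intro c d hcd
  simp only [Matrix.mul_apply, Matrix.transpose_apply, Finset.sum_mul]
  refine Finset.sum_eq_zero fun j _ => Finset.sum_eq_zero fun i _ => ?_
  by_contra h
  have hPi : P i c ≠ 0 := fun h0 => h (by simp [h0])
  have hAij : A i j ≠ 0 := fun h0 => h (by simp [h0])
  have hPj : P j d ≠ 0 := fun h0 => h (by simp [h0])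
  obtain ⟨hi₂, hi₃, hi₁⟩ := not_not.mp (mt (hP i c) hPi)
  obtain ⟨hij₁, hij₂, hij₃⟩ := not_not.mp (mt (hA i j) hAij)
  obtain ⟨hj₂, hj₃, hj₁⟩ := not_not.mp (mt (hP j d) hPj)
  rw [abs_le] at hi₁ hij₁ hj₁
  -- Along the coarsening direction the three bounds give `2 * |c₁ - d₁| ≤ 3`,
  -- hence `|c₁ - d₁| ≤ 1` by integrality.
  exact hcd ⟨abs_le.mpr ⟨by omega, by omega⟩, by rwa [← hi₂, ← hj₂], by rwa [← hi₃, ← hj₃]⟩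
end
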